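/- Let X be a finite set and σ, π ∈ Π_l(X) with σ ≤ π and π = B₁L₁|…|B_kL_k. Then the interval [σ,π] in Π_l(X) is order-isomorphic to the product order ∏_{i=1}^{k} [σ ⊓ B_i, B_iL_i], where the i-th factor is an interval in the lattice Π_l(B_i) of labelled set partitions of B_i. -/

import Mathlib

open scoped Classical

noncomputable section

/-! ## Labelled set partitions -/

/-- A labelled set partition of a finite set `α`: a set partition of `α` (encoded as the
equivalence relation `rel` whose classes are the blocks) in which each block either carries
the label `l` or not (a point `x` lies in `lab` iff the block of `x` is labelled). -/
@[ext]
structure LPart (α : Type*) where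
  rel : Setoid α
  lab : Set α
  lab_mem : ∀ ⦃x y : α⦄, rel x y → (x ∈ lab ↔ y ∈ lab)

namespace LPart

variable {α : Type*}

/-- `σ ≤ π` iff every block of `σ` (together with its label) is contained in a block of `π`. -/
instance : PartialOrder (LPart α) where
  le σ π := σ.rel ≤ π.rel ∧ σ.lab ⊆ π.lab
  le_refl σ := ⟨le_rfl, subset_rfl⟩
  le_trans _ _ _ h h' := ⟨h.1.trans h'.1, h.2.trans h'.2⟩
  le_antisymm σ π h h' := LPart.ext (le_antisymm h.1 h'.1) (le_antisymm h.2 h'.2)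

/-- The join (smallest common coarsening) of two labelled set partitions: the join of the
underlying partitions, a block being labelled iff it contains a labelled block of one of the
two partitions. -/
def sup (σ π : LPart α) : LPart α where
  rel := σ.rel ⊔ π.rel
  lab := {x | ∃ y, (σ.rel ⊔ π.rel) x y ∧ (y ∈ σ.lab ∨ y ∈ π.lab)}
  lab_mem := by
    intro x y h
    constructor
    · rintro ⟨z, hz, hl⟩
      exact ⟨z, (σ.rel ⊔ π.rel).iseqv.trans ((σ.rel ⊔ π.rel).iseqv.symm h) hz, hl⟩
    · rintro ⟨z, hz, hl⟩
      exact ⟨z, (σ.rel ⊔ π.rel).iseqv.trans h hz, hl⟩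

instance _root_.Setoid.finite [Finite α] : Finite (Setoid α) :=
  Finite.of_injective (fun s : Setoid α => ⇑s) fun _ _ h => Setoid.eq_iff_rel_eq.2 h

instance [Finite α] : Finite (LPart α) :=
  Finite.of_injective (fun π : LPart α => (π.rel, π.lab))
    (fun a b h => by
      cases a; cases b
      simpa [LPart.mk.injEq] using h)

instance fintype [Finite α] : Fintype (LPart α) := Fintype.ofFinite _

/-- `π` has exactly one labelled block. -/
def OneLab (π : LPart α) : Prop :=
  π.lab.Nonempty ∧ ∀ x ∈ π.lab, ∀ y ∈ π.lab, π.rel x y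

/-- The indicator `m(π)` that `π` has exactly one labelled block. -/
def m (π : LPart α) : ℝ := if π.OneLab then 1 else 0

/-- The labelled set partition `π_X` into singleton blocks, the singleton `{x}` being
labelled iff `x ∈ K`. -/
def piX (K : Set α) : LPart α :=
  ⟨⊥, K, fun x y h => by
    have : x = y := by
      have := Setoid.bot_def (α := α)
      exact congrFun (congrFun this x) y ▸ h
    rw [this]⟩

end LPart

/-- The Möbius function of a finite poset (the unique `μ` with `μ ⋆ ζ = δ`),
evaluated at a pair of elements. -/
def mobius {P : Type*} [Fintype P] [PartialOrder P] (x y : P) : ℝ :=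
  letI : LocallyFiniteOrder P := Fintype.toLocallyFiniteOrder
  IncidenceAlgebra.mu ℝ x y

/-- The state set `Π_l(X, π_X)`: all labelled set partitions `π ≥ π_X` having at least one
labelled block. -/
abbrev LStates (α : Type*) (K : Set α) : Type _ :=
  {π : LPart α // LPart.piX K ≤ π ∧ π.lab.Nonempty}

noncomputable instance {α : Type*} [Finite α] (K : Set α) : Fintype (LStates α K) :=
  Fintype.ofFinite _

/-- `λ(π) = ∑_{σ ∈ Π_l(X,π_X), σ ≥ π} μ_{Π_l(X)}(π, σ) m(σ)`. -/
def lamda {α : Type*} [Finite α] (K : Set α) (π : LPart α) : ℝ :=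
  letI : Fintype (LPart α) := LPart.fintype
  ∑ σ : LStates α K, if π ≤ σ.1 then mobius π σ.1 * LPart.m σ.1 else 0

/-- The restriction `τ ⊓ B` of a labelled set partition `τ` of `α` to a subset `B ⊆ α`:
its blocks are the nonempty intersections of blocks of `τ` with `B`, keeping their labels. -/
def LPart.restrict {α : Type*} (τ : LPart α) (B : Set α) : LPart B where
  rel := Setoid.comap Subtype.val τ.rel
  lab := {a : B | (a : α) ∈ τ.lab}
  lab_mem := fun x y h => τ.lab_mem ((Setoid.comap_rel _ _ _ _).1 h)

/-- The block of `π` indexed by the class `c` (as a subset of `α`). -/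
def LPart.blockOf {α : Type*} (π : LPart α) (c : Quotient π.rel) : Set α :=
  {x : α | Quotient.mk π.rel x = c}

/-!
A labelled set partition all of whose blocks lie in fibres of a map `p` amounts to a labelled set
partition of each fibre, with the order read off fibrewise: restriction to the fibres reflects the
order because no block crosses two fibres, and it is onto because partitions of the fibres can be
glued. The blocks of `π` are the fibres of the quotient map of `π`, and everything below `π` has its
blocks inside them.
-/

namespace LPart

variable {α ι : Type*}

theorem restrict_mono {σ τ : LPart α} (h : σ ≤ τ) (B : Set α) : σ.restrict B ≤ τ.restrict B :=
  ⟨fun _ _ hr => h.1 hr, fun _ hl => h.2 hl⟩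

theorem le_iff_forall_restrict_le {p : α → ι} {σ τ : LPart α} (hσ : σ.rel ≤ Setoid.ker p) :
    σ ≤ τ ↔ ∀ i, σ.restrict (p ⁻¹' {i}) ≤ τ.restrict (p ⁻¹' {i}) := by
  refine ⟨fun h i => restrict_mono h _, fun h => ⟨fun x y hxy => ?_, fun x hx => ?_⟩⟩
  · have hpxy : p x = p y := hσ hxy
    exact (h (p y)).1 (x := ⟨x, hpxy⟩) (y := ⟨y, rfl⟩) hxy
  · have hx_restrict : ⟨x, rfl⟩ ∈ (σ.restrict (p ⁻¹' {p x})).lab := hx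
    exact (h (p x)).2 hx_restrict

/-- Whether a block carries the label, blocks being encoded as the classes of the equivalence
relation. -/
def IsLabelled (τ : LPart α) : Quotient τ.rel → Prop :=
  Quotient.lift (· ∈ τ.lab) fun _ _ h => propext (τ.lab_mem h)

section Glue

variable (p : α → ι) (f : ∀ i, LPart (p ⁻¹' {i}))

/-- The block containing `x` in a family `f` of labelled set partitions of the fibres of `p`,
tagged with the fibre in which it lies. -/
def fiberBlock (x : α) : Σ i, Quotient (f i).rel :=
  ⟨p x, Quotient.mk _ ⟨x, rfl⟩⟩

theorem fiberBlock_coe {i : ι} (x : p ⁻¹' {i}) :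
    fiberBlock p f x = ⟨i, Quotient.mk _ x⟩ := by
  obtain ⟨x, rfl⟩ := x
  rfl

/-- The disjoint union of a family of labelled set partitions of the fibres of `p`, as a labelled
set partition of the whole set: two points are equivalent iff they lie in the same block of the
same member of the family. -/
def glue : LPart α where
  rel := Setoid.ker (fiberBlock p f)
  lab := {x | (f _).IsLabelled (fiberBlock p f x).2}
  lab_mem _ _ h :=
    iff_of_eq (congrArg (fun b : Σ i, Quotient (f i).rel => (f b.1).IsLabelled b.2) h)

theorem glue_rel_le_ker : (glue p f).rel ≤ Setoid.ker p :=
  fun _ _ h => congrArg Sigma.fst h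

theorem glue_rel_coe_iff {i : ι} (x y : p ⁻¹' {i}) : (glue p f).rel x y ↔ (f i).rel x y := by
  change fiberBlock p f x = fiberBlock p f y ↔ _
  rw [fiberBlock_coe, fiberBlock_coe, sigma_mk_injective.eq_iff, Quotient.eq]

theorem coe_mem_glue_lab_iff {i : ι} (x : p ⁻¹' {i}) : ↑x ∈ (glue p f).lab ↔ x ∈ (f i).lab := by
  obtain ⟨x, rfl⟩ := x
  rfl

theorem restrict_glue (i : ι) : (glue p f).restrict (p ⁻¹' {i}) = f i :=
  LPart.ext (Setoid.ext (glue_rel_coe_iff p f)) (Set.ext (coe_mem_glue_lab_iff p f))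

end Glue

end LPart

open LPart in
theorem interval_orderIso_pi_blocks_general {α ι : Type*} (p : α → ι) (σ π : LPart α)
    (hσ : σ.rel ≤ Setoid.ker p) (hπ : π.rel ≤ Setoid.ker p) :
    Nonempty (Set.Icc σ π ≃o
      ∀ i, Set.Icc (σ.restrict (p ⁻¹' {i})) (π.restrict (p ⁻¹' {i}))) := by
  let restrictAll : Set.Icc σ π ↪o
      ∀ i, Set.Icc (σ.restrict (p ⁻¹' {i})) (π.restrict (p ⁻¹' {i})) :=
    OrderEmbedding.ofMapLEIff
      (fun τ i => ⟨τ.1.restrict _, restrict_mono τ.2.1 _, restrict_mono τ.2.2 _⟩)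
      fun τ _ => (le_iff_forall_restrict_le (τ.2.2.1.trans hπ)).symm
  have restrictAll_surjective : Function.Surjective restrictAll := by
    intro f
    let g := glue p fun i => (f i).1
    have hg (i) : g.restrict (p ⁻¹' {i}) = f i := restrict_glue p _ i
    have hσg : σ ≤ g := (le_iff_forall_restrict_le hσ).2 fun i => (f i).2.1.trans_eq (hg i).symm
    have hgπ : g ≤ π :=
      (le_iff_forall_restrict_le (glue_rel_le_ker p _)).2 fun i => (hg i).trans_le (f i).2.2
    exact ⟨⟨g, hσg, hgπ⟩, funext fun i => Subtype.ext (hg i)⟩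
  exact ⟨RelIso.ofSurjective restrictAll restrictAll_surjective⟩

/-- For `σ ≤ π` in `Π_l(X)`, the interval `[σ, π]` is order-isomorphic to the product order
`∏_i [σ ⊓ B_i, B_i L_i]` over the blocks `B_i` of `π`, the `i`-th factor being an interval
in `Π_l(B_i)` (its top `B_i L_i` is the one-block labelled partition `π ⊓ B_i` of `B_i`). -/
theorem interval_orderIso_pi_blocks {α : Type*} [Fintype α] (σ π : LPart α) (h : σ ≤ π) :
    Nonempty ((Set.Icc σ π) ≃o
      ∀ c : Quotient π.rel,
        Set.Icc (σ.restrict (π.blockOf c)) (π.restrict (π.blockOf c))) := by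
  have hπ : π.rel ≤ Setoid.ker (Quotient.mk π.rel) := (Setoid.ker_mk_eq π.rel).ge
  exact interval_orderIso_pi_blocks_general (Quotient.mk π.rel) σ π (h.1.trans hπ) hπ

end
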